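/- arXiv:1612.03351 — 2 statements merged into one kernel-verified Lean document; each statement's English description precedes it below -/
import Mathlib

section
/- For every τ ∈ H, −i · ∑_{m ∈ ℤ+1/2} m · e(m²τ/2 + m/2) = e(τ/8) · ∏_{n=1}^{∞} (1 − e(nτ))³; i.e. the theta series η³(τ) := −i ∑_{m ∈ ℤ+1/2} m e(m²τ/2 + m/2) equals q^{1/8} ∏_{n≥1} (1 − qⁿ)³ with q = e(τ). -/
open Complex MeasureTheory
open scoped Classical

noncomputable section

/-- `e(a) = exp(2πia)`. -/
def e (a : ℂ) : ℂ := Complex.exp (2 * (Real.pi : ℂ) * Complex.I * a)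

/-- The Fourier transform `F(g)(x) = ∫ g(w) e(wx) dw`. -/
def fourierT (g : ℝ → ℂ) (x : ℝ) : ℂ := ∫ w : ℝ, g w * e ((w * x : ℝ))

/-- The operator `E_σ(f)(x) = e(x²σ/2) ∫_0^x e(-w²σ/2) f(w) dw`. -/
def Eop (σ : ℂ) (f : ℝ → ℂ) (x : ℝ) : ℂ :=
  e ((x : ℂ)^2 * σ / 2) * ∫ w in (0:ℝ)..x, e (-(w : ℂ)^2 * σ / 2) * f w

/-- `ω_τ(x) = e(-x²τ/2) ∑_{m ∈ ℤ+1/2, m ≥ |x|} e(m²τ/2 + m/2)`. -/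
def omega (τ : ℂ) (x : ℝ) : ℂ :=
  e (-(x : ℂ)^2 * τ / 2) *
    ∑' m : ℤ, if |x| ≤ (m : ℝ) + 1/2 then
      e (((m : ℂ) + 1/2)^2 / 2 * τ + ((m : ℂ) + 1/2) / 2) else 0

/-- `η³(τ) = -i ∑_{m ∈ ℤ+1/2} m e(m²τ/2 + m/2)`. -/
def eta3 (τ : ℂ) : ℂ :=
  -Complex.I * ∑' m : ℤ, ((m : ℂ) + 1/2) * e (((m : ℂ) + 1/2)^2 / 2 * τ + ((m : ℂ) + 1/2) / 2)

/-- The complementary error function. -/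
def erfc (x : ℝ) : ℝ := (2 / Real.sqrt Real.pi) * ∫ t in Set.Ioi x, Real.exp (-t^2)

/-- `g⁺_τ`. -/
def gplus (τ : ℂ) (x : ℝ) : ℂ :=
  e (-(x : ℂ)^2 * τ / 2) * ((Real.sign x : ℂ) / (Complex.I * eta3 τ)) *
    ∑' m : ℤ, if |x| < (m : ℝ) + 1/2 then
      (((m : ℝ) + 1/2 - |x| : ℝ) : ℂ) * e (((m : ℂ) + 1/2)^2 / 2 * τ + ((m : ℂ) + 1/2) / 2)
    else 0

/-- `g*_τ`. -/
def gstar (τ : ℂ) (x : ℝ) : ℂ :=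
  e (-(x : ℂ)^2 * τ / 2) * ((Real.sign x : ℂ) / 2) *
    (erfc (Real.sqrt (2 * Real.pi * τ.im) * |x|) : ℂ)

/-- `g_τ = g⁺_τ - g*_τ`. -/
def gfun (τ : ℂ) (x : ℝ) : ℂ := gplus τ x - gstar τ x

/-- The operator `ξ_k f = 2i v^k conj(∂f/∂τ̄)`, with `∂/∂τ̄ = (1/2)(∂/∂u + i ∂/∂v)`. -/
def xi (k : ℝ) (f : ℂ → ℂ) (τ : ℂ) : ℂ :=
  2 * Complex.I * ((τ.im ^ k : ℝ) : ℂ) *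
    (starRingEnd ℂ) ((1/2 : ℂ) * (fderiv ℝ f τ 1 + Complex.I * fderiv ℝ f τ Complex.I))

/-- Sum of divisors function `σ₁`. -/
def sigma1 (n : ℕ) : ℕ := ∑ d ∈ Nat.divisors n, d

/-- The weight 2 Eisenstein series `E₂`. -/
def E2 (τ : ℂ) : ℂ := 1 - 24 * ∑' n : ℕ, (sigma1 (n+1) : ℂ) * e ((n + 1 : ℂ) * τ)

/-- `ϑ̃_{N,h}`. -/
def tvtheta (N : ℕ) (h : ℝ) (τ : ℂ) : ℂ :=
  (if ∃ m : ℤ, h = (m : ℝ) + 1/2 then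
      e ((h : ℂ) / 2) * E2 τ / (12 * (N : ℂ) * Complex.I * eta3 τ) else 0)
  + ∑' n : ℤ, gfun τ ((N : ℝ) * n + h)

/-- The Schwartz function `φ_τ(x,y) = √(2v)·x·e(x²τ/2 - y²τ̄/2)`. -/
def Phi (τ : ℂ) (x y : ℝ) : ℂ :=
  (Real.sqrt (2 * τ.im) : ℂ) * (x : ℂ) *
    e ((x : ℂ)^2 * τ / 2 - (y : ℂ)^2 * (starRingEnd ℂ) τ / 2)

/-- The signature (1,1) bilinear form `B((a₁,a₂),(b₁,b₂)) = a₁b₂ + a₂b₁`. -/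
def Bform (a b : ℝ × ℝ) : ℝ := a.1 * b.2 + a.2 * b.1

/-- `Z⁺_t = (t/√2, t⁻¹/√2)`. -/
def Zp (t : ℝ) : ℝ × ℝ := (t / Real.sqrt 2, t⁻¹ / Real.sqrt 2)

/-- `Z⁻_t = (t/√2, -t⁻¹/√2)`. -/
def Zm (t : ℝ) : ℝ × ℝ := (t / Real.sqrt 2, -t⁻¹ / Real.sqrt 2)

end

/-!
Write `T(r) = r(r + 1)/2`. Induction on `n`, starting from the `q`-binomial theorem, gives the
finite triple product

`∏_{i ≤ m} (1 + x q ^ i) ∏_{i < n} (x + q ^ i) = ∑ₖ [m + n, k] q ^ T(k - n) x ^ k`.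

With `n` factors in the first product and `n + 1` in the second, one factor is `x + 1`, and the
coefficients of `x ^ (n - j)` and `x ^ (n + 1 + j)` agree. Dividing by `x + 1` and then setting
`x = -1` turns each such pair into the weight `(-1) ^ j (2 j + 1)`:

`∑_{j ≤ n} (-1) ^ j (2 j + 1) q ^ T(j) [2 n + 1, n + 1 + j] = ∏_{i ≤ n} (1 - q ^ i) ^ 2`.

As `n → ∞` the Gaussian binomials stay bounded and tend to `∏ (1 - q ^ i)⁻¹`, so dominated
convergence yields the Jacobi identity `∑_{j ≥ 0} (-1) ^ j (2 j + 1) q ^ T(j) = ∏ (1 - q ^ i) ^ 3`.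
The theta series is this series counted twice, up to normalization, since
`(m + 1/2)² / 2 = T(m) + 1/8` and `m ↦ -m - 1` preserves its terms.
-/

open Filter Finset Topology

section Triangular

/-- The triangular number `r(r + 1)/2` of an integer `r`, as a natural number so that it can serve
as an exponent in any monoid. -/
def triangular (r : ℤ) : ℕ := (r * (r + 1) / 2).toNat

theorem two_mul_triangular (r : ℤ) : 2 * (triangular r : ℤ) = r * (r + 1) := by
  have h_nonneg : 0 ≤ r * (r + 1) := by
    rcases le_or_gt 0 r with hr | hr
    · positivity
    · exact mul_nonneg_of_nonpos_of_nonpos hr.le (by lia)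
  rw [triangular, Int.toNat_of_nonneg (Int.ediv_nonneg h_nonneg (by norm_num)),
    Int.mul_ediv_cancel' (Int.even_mul_succ_self r).two_dvd]

@[simp]
theorem triangular_zero : triangular 0 = 0 := rfl

theorem triangular_natCast_succ (n : ℕ) : triangular (n + 1 : ℕ) = triangular n + (n + 1) := by
  grind [two_mul_triangular]

theorem triangular_neg_sub_one (r : ℤ) : triangular (-r - 1) = triangular r := by
  grind [two_mul_triangular]

theorem le_triangular (n : ℕ) : n ≤ triangular n := by
  cases n with
  | zero => exact le_rfl
  | succ n => rw [triangular_natCast_succ]; exact Nat.le_add_left _ _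

end Triangular

section GaussBinom

/-- The Gaussian binomial coefficient `[n, k]_q`, defined for an arbitrary element `q` of a semiring
by the `q`-Pascal rule, so that no division is involved. -/
def gaussBinom {R : Type*} [Semiring R] (q : R) : ℕ → ℕ → R
  | _, 0 => 1
  | 0, _ + 1 => 0
  | n + 1, k + 1 => gaussBinom q n k + q ^ (k + 1) * gaussBinom q n (k + 1)

section Semiring

variable {R : Type*} [Semiring R] (q : R)

@[simp]
theorem gaussBinom_zero_right (n : ℕ) : gaussBinom q n 0 = 1 := by
  cases n <;> rfl

theorem gaussBinom_succ_succ (n k : ℕ) :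
    gaussBinom q (n + 1) (k + 1) = gaussBinom q n k + q ^ (k + 1) * gaussBinom q n (k + 1) :=
  rfl

theorem gaussBinom_eq_zero_of_lt {n k : ℕ} (h : n < k) : gaussBinom q n k = 0 := by
  induction n generalizing k with
  | zero => obtain ⟨k, rfl⟩ := Nat.exists_eq_succ_of_ne_zero h.ne'; rfl
  | succ n ih =>
    obtain ⟨k, rfl⟩ := Nat.exists_eq_succ_of_ne_zero (Nat.ne_zero_of_lt h)
    have hk : n < k := Nat.lt_of_succ_lt_succ h
    rw [gaussBinom_succ_succ, ih hk, ih (Nat.lt_succ_of_lt hk), mul_zero, add_zero]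

@[simp]
theorem gaussBinom_self (n : ℕ) : gaussBinom q n n = 1 := by
  induction n with
  | zero => rfl
  | succ n ih => simp [gaussBinom_succ_succ, ih, gaussBinom_eq_zero_of_lt q n.lt_succ_self]

theorem map_gaussBinom {S : Type*} [Semiring S] (f : R →+* S) (n k : ℕ) :
    f (gaussBinom q n k) = gaussBinom (f q) n k := by
  induction n generalizing k with
  | zero => cases k <;> simp [gaussBinom]
  | succ n ih => cases k <;> simp [gaussBinom_succ_succ, ih]

end Semiring

section CommSemiring

variable {R : Type*} [CommSemiring R] (q : R)

theorem gaussBinom_add_succ_succ (k l : ℕ) :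
    gaussBinom q (k + l + 1) (k + 1) =
      q ^ l * gaussBinom q (k + l) k + gaussBinom q (k + l) (k + 1) := by
  induction k generalizing l with
  | zero =>
    induction l with
    | zero => simp [gaussBinom]
    | succ l ih =>
      simp only [zero_add, gaussBinom_zero_right, mul_one] at ih ⊢
      calc gaussBinom q (l + 1 + 1) 1 = 1 + q * gaussBinom q (l + 1) 1 := by
            simp [gaussBinom_succ_succ q (l + 1)]
        _ = q ^ (l + 1) + (1 + q * gaussBinom q l 1) := by rw [ih]; ring
        _ = q ^ (l + 1) + gaussBinom q (l + 1) 1 := by simp [gaussBinom_succ_succ q l]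
  | succ k ihk =>
    induction l with
    | zero => simp [gaussBinom_eq_zero_of_lt]
    | succ l ihl =>
      have hk := ihk (l + 1)
      rw [show k + (l + 1) = k + 1 + l by lia] at hk
      rw [← add_assoc]
      set n := k + 1 + l
      calc gaussBinom q (n + 1 + 1) (k + 1 + 1)
          = gaussBinom q (n + 1) (k + 1) + q ^ (k + 2) * gaussBinom q (n + 1) (k + 2) := rfl
        _ = q ^ (l + 1) * gaussBinom q n k + gaussBinom q n (k + 1)
              + q ^ (k + 2) * (q ^ l * gaussBinom q n (k + 1) + gaussBinom q n (k + 2)) := by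
            rw [hk, ihl]
        _ = q ^ (l + 1) * (gaussBinom q n k + q ^ (k + 1) * gaussBinom q n (k + 1))
              + (gaussBinom q n (k + 1) + q ^ (k + 2) * gaussBinom q n (k + 2)) := by ring
        _ = q ^ (l + 1) * gaussBinom q (n + 1) (k + 1) + gaussBinom q (n + 1) (k + 2) := rfl

theorem gaussBinom_symm_add (k l : ℕ) : gaussBinom q (k + l) k = gaussBinom q (k + l) l := by
  induction k generalizing l with
  | zero => simp
  | succ k ihk =>
    induction l with
    | zero => simp
    | succ l ihl =>
      have hk := ihk (l + 1)
      have hl := gaussBinom_add_succ_succ q l (k + 1)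
      rw [show k + (l + 1) = k + 1 + l by lia] at hk
      rw [show l + (k + 1) = k + 1 + l by lia] at hl
      rw [← add_assoc, gaussBinom_succ_succ, hl, hk, ihl, add_comm]

theorem gaussBinom_symm_middle {n j : ℕ} (hj : j ≤ n) :
    gaussBinom q (2 * n + 1) (n - j) = gaussBinom q (2 * n + 1) (n + 1 + j) := by
  rw [show 2 * n + 1 = n - j + (n + 1 + j) by lia, gaussBinom_symm_add]

theorem sum_range_succ_mul_pow_eq_mul {c d : ℕ → R} {a b x : R} {n : ℕ} (hc : c (n + 1) = 0)
    (h_zero : d 0 = b * c 0) (h_succ : ∀ k, d (k + 1) = a * c k + b * c (k + 1)) :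
    ∑ k ∈ range (n + 2), d k * x ^ k = (a * x + b) * ∑ k ∈ range (n + 1), c k * x ^ k := by
  have h_shift : ∑ k ∈ range (n + 1), c k * x ^ k =
      ∑ k ∈ range (n + 1), c (k + 1) * x ^ (k + 1) + c 0 := by
    rw [← add_zero (∑ k ∈ range (n + 1), c k * x ^ k), ← zero_mul (x ^ (n + 1)), ← hc,
      ← sum_range_succ, sum_range_succ', pow_zero, mul_one]
  calc ∑ k ∈ range (n + 2), d k * x ^ k
      = ∑ k ∈ range (n + 1), (a * x * (c k * x ^ k) + b * (c (k + 1) * x ^ (k + 1))) + b * c 0 := by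
        rw [sum_range_succ', h_zero, pow_zero, mul_one]
        congr 1
        exact sum_congr rfl fun k _ ↦ by rw [h_succ]; ring
    _ = a * x * ∑ k ∈ range (n + 1), c k * x ^ k
          + b * (∑ k ∈ range (n + 1), c (k + 1) * x ^ (k + 1) + c 0) := by
        rw [sum_add_distrib, ← mul_sum, ← mul_sum]; ring
    _ = (a * x + b) * ∑ k ∈ range (n + 1), c k * x ^ k := by rw [← h_shift, add_mul]

theorem prod_one_add_mul_pow_eq_sum_gaussBinom (x : R) (m : ℕ) :
    ∏ i ∈ range m, (1 + x * q ^ (i + 1)) =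
      ∑ k ∈ range (m + 1), gaussBinom q m k * q ^ triangular k * x ^ k := by
  induction m generalizing x with
  | zero => simp
  | succ m ih =>
    have h_scale : ∏ i ∈ range m, (1 + x * q ^ (i + 2)) =
        ∑ k ∈ range (m + 1), gaussBinom q m k * q ^ triangular k * q ^ k * x ^ k := by
      calc ∏ i ∈ range m, (1 + x * q ^ (i + 2))
          = ∏ i ∈ range m, (1 + x * q * q ^ (i + 1)) :=
            prod_congr rfl fun i _ ↦ by rw [mul_assoc, ← pow_succ']
        _ = ∑ k ∈ range (m + 1), gaussBinom q m k * q ^ triangular k * q ^ k * x ^ k := by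
            rw [ih]; exact sum_congr rfl fun k _ ↦ by ring
    rw [prod_range_succ', h_scale, zero_add, pow_one, mul_comm, add_comm, mul_comm x]
    refine (sum_range_succ_mul_pow_eq_mul ?_ ?_ fun k ↦ ?_).symm
    · simp [gaussBinom_eq_zero_of_lt]
    · simp
    · rw [gaussBinom_succ_succ, triangular_natCast_succ]; ring

theorem prod_one_add_mul_prod_add_eq_sum_gaussBinom (x : R) (m n : ℕ) :
    (∏ i ∈ range m, (1 + x * q ^ (i + 1))) * ∏ i ∈ range n, (x + q ^ i) =
      ∑ k ∈ range (m + n + 1), gaussBinom q (m + n) k * q ^ triangular (k - n) * x ^ k := by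
  induction n with
  | zero => simp [prod_one_add_mul_pow_eq_sum_gaussBinom]
  | succ n ih =>
    have h_triangular_zero :
        triangular ((0 : ℕ) - (n + 1 : ℕ)) = n + triangular ((0 : ℕ) - n) := by
      grind [two_mul_triangular]
    have h_pow_triangular (k : ℕ) : q ^ n * q ^ triangular ((k + 1 : ℕ) - n) =
        q ^ triangular (k - n) * q ^ (k + 1) := by
      rw [← pow_add, ← pow_add]
      congr 1
      grind [two_mul_triangular]
    have h_sum := sum_range_succ_mul_pow_eq_mul (x := x) (a := 1) (b := q ^ n) (n := m + n)
      (c := fun k ↦ gaussBinom q (m + n) k * q ^ triangular (k - n))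
      (d := fun k ↦ gaussBinom q (m + n + 1) k * q ^ triangular (k - (n + 1 : ℕ)))
      (by simp [gaussBinom_eq_zero_of_lt])
      (by simp only [gaussBinom_zero_right, one_mul, h_triangular_zero, pow_add])
      (fun k ↦ by
        rw [gaussBinom_succ_succ, mul_left_comm (q ^ n), h_pow_triangular, Nat.cast_succ,
          Nat.cast_succ, add_sub_add_right_eq_sub]
        ring)
    rw [prod_range_succ, ← mul_assoc, ih, mul_comm, ← add_assoc, h_sum, one_mul]

end CommSemiring

section CommRing

variable {R : Type*} [CommRing R] (q : R)

/-- The `q`-Pochhammer symbol `(q; q)_n = (1 - q)(1 - q ^ 2) ⋯ (1 - q ^ n)`, which plays the role of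
the factorial for Gaussian binomials. -/
def qPochhammer (n : ℕ) : R := ∏ i ∈ range n, (1 - q ^ (i + 1))

theorem qPochhammer_succ (n : ℕ) : qPochhammer q (n + 1) = qPochhammer q n * (1 - q ^ (n + 1)) :=
  prod_range_succ _ _

@[simp]
theorem qPochhammer_zero : qPochhammer q 0 = 1 := prod_range_zero _

theorem gaussBinom_add_mul_qPochhammer (k l : ℕ) :
    gaussBinom q (k + l) k * (qPochhammer q k * qPochhammer q l) = qPochhammer q (k + l) := by
  induction k generalizing l with
  | zero => simp
  | succ k ihk =>
    induction l with
    | zero => simp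
    | succ l ihl =>
      have hk := ihk (l + 1)
      rw [qPochhammer_succ q l, show k + (l + 1) = k + 1 + l by lia] at hk
      rw [qPochhammer_succ q k] at ihl
      rw [← add_assoc, gaussBinom_succ_succ, qPochhammer_succ q k, qPochhammer_succ q l,
        qPochhammer_succ q (k + 1 + l)]
      linear_combination (1 - q ^ (k + 1)) * hk + q ^ (k + 1) * (1 - q ^ (l + 1)) * ihl

theorem add_one_mul_sum_neg_pow (x : R) (j : ℕ) :
    (x + 1) * ∑ i ∈ range (2 * j + 1), (-x) ^ i = 1 + x ^ (2 * j + 1) := by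
  have h := mul_neg_geom_sum (-x) (2 * j + 1)
  rwa [Odd.neg_pow ⟨j, rfl⟩, sub_neg_eq_add, sub_neg_eq_add, add_comm 1 x] at h

theorem sum_gaussBinom_eq_add_one_mul_sum (x : R) (n : ℕ) :
    ∑ k ∈ range (2 * n + 2),
        gaussBinom q (2 * n + 1) k * q ^ triangular (k - (n + 1 : ℕ)) * x ^ k =
      (x + 1) * ∑ j ∈ range (n + 1), gaussBinom q (2 * n + 1) (n + 1 + j) * q ^ triangular j *
        x ^ (n - j) * ∑ i ∈ range (2 * j + 1), (-x) ^ i := by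
  rw [show 2 * n + 2 = n + 1 + (n + 1) by ring, sum_range_add, ← sum_range_reflect,
    ← sum_add_distrib, mul_sum]
  refine sum_congr rfl fun j hj ↦ ?_
  have hj : j ≤ n := mem_range_succ_iff.mp hj
  have h_low : triangular ((n - j : ℕ) - (n + 1 : ℕ)) = triangular j := by
    rw [← triangular_neg_sub_one]; congr 1; lia
  have h_high : triangular ((n + 1 + j : ℕ) - (n + 1 : ℕ)) = triangular j := by
    congr 1; lia
  have h_pow : x ^ (n + 1 + j) = x ^ (n - j) * x ^ (2 * j + 1) := by
    rw [← pow_add]; congr 1; lia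
  rw [add_tsub_cancel_right, h_low, h_high, h_pow, gaussBinom_symm_middle q hj]
  linear_combination (-gaussBinom q (2 * n + 1) (n + 1 + j) * q ^ triangular j * x ^ (n - j)) *
    add_one_mul_sum_neg_pow x j

open Polynomial in
theorem prod_one_add_mul_prod_add_pow_succ_eq_sum_gaussBinom (x : R) (n : ℕ) :
    (∏ i ∈ range n, (1 + x * q ^ (i + 1))) * ∏ i ∈ range n, (x + q ^ (i + 1)) =
      ∑ j ∈ range (n + 1), gaussBinom q (2 * n + 1) (n + 1 + j) * q ^ triangular j *
        x ^ (n - j) * ∑ i ∈ range (2 * j + 1), (-x) ^ i := by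
  -- `x + 1` may be a zero divisor in `R`, but `X + 1` is not one in `R[X]`.
  have h_poly : (∏ i ∈ range n, (1 + X * C q ^ (i + 1))) * ∏ i ∈ range n, (X + C q ^ (i + 1)) =
      ∑ j ∈ range (n + 1), gaussBinom (C q) (2 * n + 1) (n + 1 + j) * C q ^ triangular j *
        X ^ (n - j) * ∑ i ∈ range (2 * j + 1), (-X) ^ i := by
    apply (monic_X_add_C (1 : R)).isRegular.left
    have h := prod_one_add_mul_prod_add_eq_sum_gaussBinom (C q) X n (n + 1)
    rw [show n + (n + 1) = 2 * n + 1 by ring, sum_gaussBinom_eq_add_one_mul_sum,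
      prod_range_succ', pow_zero] at h
    simp only [map_one]
    rw [← h]; ring
  have h_eval := congrArg (evalRingHom x) h_poly
  simpa only [map_mul, map_prod, map_sum, map_add, map_one, map_neg, map_pow, map_gaussBinom,
    coe_evalRingHom, eval_X, eval_C] using h_eval

theorem sum_neg_one_pow_mul_gaussBinom (n : ℕ) :
    ∑ j ∈ range (n + 1), (-1) ^ j * (2 * j + 1) * q ^ triangular j *
      gaussBinom q (2 * n + 1) (n + 1 + j) = qPochhammer q n ^ 2 := by
  have h_pos : ∏ i ∈ range n, (1 + -1 * q ^ (i + 1)) = qPochhammer q n := by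
    simp only [qPochhammer, neg_one_mul, ← sub_eq_add_neg]
  have h_neg : ∏ i ∈ range n, (-1 + q ^ (i + 1)) = (-1) ^ n * qPochhammer q n := by
    simp only [qPochhammer, neg_add_eq_sub, ← neg_sub (1 : R), prod_neg, card_range]
  have h_sign {j : ℕ} (hj : j ≤ n) : (-1 : R) ^ n * (-1) ^ (n - j) = (-1) ^ j := by
    obtain ⟨l, rfl⟩ := Nat.exists_eq_add_of_le hj
    rw [add_tsub_cancel_left, pow_add, mul_assoc, pow_mul_pow_eq_one l (by norm_num), mul_one]
  have h_sum (j : ℕ) : ∑ i ∈ range (2 * j + 1), (- -1 : R) ^ i = 2 * j + 1 := by simp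
  have h := prod_one_add_mul_prod_add_pow_succ_eq_sum_gaussBinom q (-1) n
  simp only [h_pos, h_neg, h_sum] at h
  calc ∑ j ∈ range (n + 1), (-1) ^ j * (2 * j + 1) * q ^ triangular j *
        gaussBinom q (2 * n + 1) (n + 1 + j)
      = (-1) ^ n * ∑ j ∈ range (n + 1), gaussBinom q (2 * n + 1) (n + 1 + j) * q ^ triangular j *
          (-1) ^ (n - j) * (2 * j + 1) := by
        rw [mul_sum]
        refine sum_congr rfl fun j hj ↦ ?_
        rw [← h_sign (mem_range_succ_iff.mp hj)]
        ring
    _ = (-1) ^ n * (-1) ^ (n - 0) * qPochhammer q n ^ 2 := by rw [← h, tsub_zero]; ring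
    _ = qPochhammer q n ^ 2 := by rw [h_sign n.zero_le, pow_zero, one_mul]

end CommRing

end GaussBinom

section NormedField

variable {𝕜 : Type*} [NormedField 𝕜] {q : 𝕜}

theorem one_sub_pow_succ_ne_zero (hq : ‖q‖ < 1) (n : ℕ) : 1 - q ^ (n + 1) ≠ 0 := by
  intro h
  have h_norm : ‖q ^ (n + 1)‖ < 1 := by
    rw [norm_pow]
    exact pow_lt_one₀ (norm_nonneg q) hq n.succ_ne_zero
  rw [← sub_eq_zero.mp h, norm_one] at h_norm
  exact h_norm.false

theorem qPochhammer_ne_zero (hq : ‖q‖ < 1) (n : ℕ) : qPochhammer q n ≠ 0 :=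
  prod_ne_zero_iff.mpr fun i _ ↦ one_sub_pow_succ_ne_zero hq i

theorem gaussBinom_add_eq_div (hq : ‖q‖ < 1) (k l : ℕ) :
    gaussBinom q (k + l) k = qPochhammer q (k + l) / (qPochhammer q k * qPochhammer q l) :=
  eq_div_of_mul_eq (mul_ne_zero (qPochhammer_ne_zero hq k) (qPochhammer_ne_zero hq l))
    (gaussBinom_add_mul_qPochhammer q k l)

theorem summable_norm_neg_pow_succ (hq : ‖q‖ < 1) : Summable fun n : ℕ ↦ ‖-q ^ (n + 1)‖ := by
  simpa only [norm_neg, norm_pow] using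
    (summable_nat_add_iff 1).mpr (summable_geometric_of_lt_one (norm_nonneg q) hq)

theorem norm_neg_one_pow_mul_pow_triangular_le (hq : ‖q‖ < 1) (j : ℕ) :
    ‖(-1) ^ j * (2 * j + 1) * q ^ triangular j‖ ≤ (2 * j + 1) * ‖q‖ ^ j := by
  have h_odd : ‖(2 * j + 1 : 𝕜)‖ ≤ 2 * j + 1 := by
    simpa using Nat.norm_cast_le (α := 𝕜) (2 * j + 1)
  have h_pow : ‖q‖ ^ triangular j ≤ ‖q‖ ^ j :=
    pow_le_pow_of_le_one (norm_nonneg q) hq.le (le_triangular j)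
  simp only [norm_mul, norm_pow, norm_neg, norm_one, one_pow, one_mul]
  gcongr

theorem summable_two_mul_add_one_mul_pow {r : ℝ} (hr₀ : 0 ≤ r) (hr : r < 1) :
    Summable fun j : ℕ ↦ (2 * j + 1) * r ^ j := by
  have h_linear := summable_pow_mul_geometric_of_norm_lt_one 1 (Real.norm_of_nonneg hr₀ ▸ hr)
  refine ((h_linear.mul_left 2).add (summable_geometric_of_lt_one hr₀ hr)).congr fun j ↦ ?_
  ring

variable [CompleteSpace 𝕜]

theorem multipliable_one_sub_pow_succ (hq : ‖q‖ < 1) :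
    Multipliable fun n : ℕ ↦ 1 - q ^ (n + 1) := by
  simp only [sub_eq_add_neg]
  exact multipliable_one_add_of_summable (summable_norm_neg_pow_succ hq)

theorem tprod_one_sub_pow_succ_ne_zero (hq : ‖q‖ < 1) : ∏' n : ℕ, (1 - q ^ (n + 1)) ≠ 0 := by
  simp only [sub_eq_add_neg]
  refine tprod_one_add_ne_zero_of_summable (fun n ↦ ?_) (summable_norm_neg_pow_succ hq)
  rw [← sub_eq_add_neg]
  exact one_sub_pow_succ_ne_zero hq n

theorem tendsto_qPochhammer (hq : ‖q‖ < 1) :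
    Tendsto (qPochhammer q) atTop (𝓝 (∏' n : ℕ, (1 - q ^ (n + 1)))) :=
  (multipliable_one_sub_pow_succ hq).tendsto_prod_tprod_nat

theorem tendsto_gaussBinom_add {ι : Type*} {F : Filter ι} {k l : ι → ℕ} (hq : ‖q‖ < 1)
    (hk : Tendsto k F atTop) (hl : Tendsto l F atTop) :
    Tendsto (fun i ↦ gaussBinom q (k i + l i) (k i)) F
      (𝓝 (∏' n : ℕ, (1 - q ^ (n + 1)))⁻¹) := by
  have h_ne := tprod_one_sub_pow_succ_ne_zero hq
  have h_lim := tendsto_qPochhammer hq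
  simp only [gaussBinom_add_eq_div hq]
  rw [← div_mul_cancel_left₀ h_ne]
  exact (h_lim.comp (hk.atTop_add_atTop hl)).div ((h_lim.comp hk).mul (h_lim.comp hl))
    (mul_ne_zero h_ne h_ne)

theorem exists_norm_gaussBinom_le (hq : ‖q‖ < 1) : ∃ B, ∀ n k, ‖gaussBinom q n k‖ ≤ B := by
  have h_lim := tendsto_qPochhammer hq
  obtain ⟨C, hC⟩ := (Metric.isBounded_range_of_tendsto _ h_lim).exists_norm_le
  obtain ⟨D, hD⟩ := (Metric.isBounded_range_of_tendsto _
    (h_lim.inv₀ (tprod_one_sub_pow_succ_ne_zero hq))).exists_norm_le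
  simp only [Set.forall_mem_range] at hC hD
  have hC₀ : 0 ≤ C := (norm_nonneg _).trans (hC 0)
  have hD₀ : 0 ≤ D := (norm_nonneg _).trans (hD 0)
  refine ⟨C * (D * D), fun n k ↦ ?_⟩
  rcases lt_or_ge n k with hnk | hkn
  · rw [gaussBinom_eq_zero_of_lt q hnk, norm_zero]
    positivity
  · obtain ⟨l, rfl⟩ := Nat.exists_eq_add_of_le hkn
    rw [gaussBinom_add_eq_div hq, div_eq_mul_inv, mul_inv, norm_mul, norm_mul]
    gcongr
    exacts [hC _, hD _, hD _]

theorem summable_neg_one_pow_mul_pow_triangular (hq : ‖q‖ < 1) :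
    Summable fun j : ℕ ↦ (-1) ^ j * (2 * j + 1) * q ^ triangular j :=
  .of_norm_bounded (summable_two_mul_add_one_mul_pow (norm_nonneg q) hq)
    (norm_neg_one_pow_mul_pow_triangular_le hq)

theorem tsum_neg_one_pow_mul_pow_triangular (hq : ‖q‖ < 1) :
    ∑' j : ℕ, (-1) ^ j * (2 * j + 1) * q ^ triangular j = (∏' n : ℕ, (1 - q ^ (n + 1))) ^ 3 := by
  set P := ∏' n : ℕ, (1 - q ^ (n + 1))
  let a (j : ℕ) : 𝕜 := (-1) ^ j * (2 * j + 1) * q ^ triangular j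
  have h_finite (n : ℕ) :
      ∑' j, a j * gaussBinom q (2 * n + 1) (n + 1 + j) = qPochhammer q n ^ 2 := by
    rw [← sum_neg_one_pow_mul_gaussBinom]
    refine tsum_eq_sum fun j hj ↦ ?_
    rw [gaussBinom_eq_zero_of_lt q (by grind), mul_zero]
  have h_term (j : ℕ) :
      Tendsto (fun n ↦ a j * gaussBinom q (2 * n + 1) (n + 1 + j)) atTop (𝓝 (a j * P⁻¹)) := by
    have h_upper : Tendsto (fun n ↦ n + 1 + j) atTop atTop := by
      simpa only [add_assoc] using tendsto_add_atTop_nat (1 + j)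
    refine ((tendsto_gaussBinom_add hq h_upper (tendsto_sub_atTop_nat j)).const_mul (a j)).congr' ?_
    filter_upwards [eventually_ge_atTop j] with n hn
    rw [show n + 1 + j + (n - j) = 2 * n + 1 by lia]
  obtain ⟨B, hB⟩ := exists_norm_gaussBinom_le hq
  have h_limit : Tendsto (fun n ↦ ∑' j, a j * gaussBinom q (2 * n + 1) (n + 1 + j)) atTop
      (𝓝 (∑' j, a j * P⁻¹)) := by
    refine tendsto_tsum_of_dominated_convergence
      ((summable_two_mul_add_one_mul_pow (norm_nonneg q) hq).mul_right B) h_term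
      (.of_forall fun n j ↦ ?_)
    rw [norm_mul]
    exact mul_le_mul (norm_neg_one_pow_mul_pow_triangular_le hq j) (hB _ _)
      (norm_nonneg _) (by positivity)
  simp only [h_finite] at h_limit
  have h_eq := tendsto_nhds_unique h_limit ((tendsto_qPochhammer hq).pow 2)
  rw [tsum_mul_right, mul_inv_eq_iff_eq_mul₀ (tprod_one_sub_pow_succ_ne_zero hq)] at h_eq
  exact h_eq.trans (pow_succ P 2).symm

theorem hasSum_int_neg_one_zpow_mul_pow_triangular (hq : ‖q‖ < 1) :
    HasSum (fun m : ℤ ↦ (-1) ^ m * (2 * m + 1) * q ^ triangular m)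
      (2 * (∏' n : ℕ, (1 - q ^ (n + 1))) ^ 3) := by
  have h_nat := (summable_neg_one_pow_mul_pow_triangular hq).hasSum
  rw [tsum_neg_one_pow_mul_pow_triangular hq] at h_nat
  rw [two_mul]
  refine HasSum.of_nat_of_neg_add_one (by simpa using h_nat) ?_
  convert h_nat using 2 with j
  have h_sign : (-1 : 𝕜) ^ (-((j : ℤ) + 1)) = -(-1) ^ j := by
    rw [zpow_neg, zpow_add_one₀ (by simp), zpow_natCast, mul_neg_one, inv_neg, ← inv_pow,
      inv_neg_one]
  rw [h_sign, neg_add', triangular_neg_sub_one]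
  push_cast
  ring

end NormedField

section Exponential

theorem e_natCast_mul (n : ℕ) (a : ℂ) : e (n * a) = e a ^ n := by
  rw [e, e, ← Complex.exp_nat_mul, mul_left_comm]

theorem e_intCast_mul (m : ℤ) (a : ℂ) : e (m * a) = e a ^ m := by
  rw [e, e, ← Complex.exp_int_mul, mul_left_comm]

theorem e_add (a b : ℂ) : e (a + b) = e a * e b := by
  rw [e, e, e, ← Complex.exp_add, mul_add]

theorem e_one_half : e (1 / 2) = -1 := by
  rw [e, ← Complex.exp_pi_mul_I]
  congr 1
  ring

theorem e_one_fourth : e (1 / 4) = Complex.I := by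
  rw [e, show 2 * (Real.pi : ℂ) * Complex.I * (1 / 4) = Real.pi / 2 * Complex.I by ring,
    Complex.exp_pi_div_two_mul_I]

theorem norm_e_lt_one {τ : ℂ} (hτ : 0 < τ.im) : ‖e τ‖ < 1 :=
  UpperHalfPlane.norm_exp_two_pi_I_lt_one ⟨τ, hτ⟩

theorem e_theta_term (τ : ℂ) (m : ℤ) :
    e (((m : ℂ) + 1/2)^2 / 2 * τ + ((m : ℂ) + 1/2) / 2) =
      Complex.I * e (τ / 8) * ((-1) ^ m * e τ ^ triangular m) := by
  have h_triangular : (2 * triangular m : ℂ) = m * (m + 1) := mod_cast two_mul_triangular m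
  have h_exponent : ((m : ℂ) + 1/2)^2 / 2 * τ + ((m : ℂ) + 1/2) / 2 =
      1 / 4 + τ / 8 + (m * (1 / 2) + triangular m * τ) := by
    linear_combination (-τ / 2) * h_triangular
  rw [h_exponent, e_add, e_add, e_add, e_intCast_mul, e_natCast_mul, e_one_half, e_one_fourth]

end Exponential

/-- the product expansion `η³(τ) = q^{1/8} ∏_{n≥1} (1-qⁿ)³`. -/
theorem eta3_product (τ : ℂ) (hτ : 0 < τ.im) :
    eta3 τ = e (τ / 8) * ∏' n : ℕ, (1 - e ((n + 1 : ℂ) * τ))^3 := by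
  have hq := norm_e_lt_one hτ
  have h_prod : ∏' n : ℕ, (1 - e ((n + 1 : ℂ) * τ)) ^ 3 =
      (∏' n : ℕ, (1 - e τ ^ (n + 1))) ^ 3 := by
    rw [← (multipliable_one_sub_pow_succ hq).tprod_pow]
    exact tprod_congr fun n ↦ by rw [← e_natCast_mul, Nat.cast_succ]
  have h_term (m : ℤ) :
      ((m : ℂ) + 1/2) * e (((m : ℂ) + 1/2)^2 / 2 * τ + ((m : ℂ) + 1/2) / 2) =
        Complex.I * e (τ / 8) / 2 * ((-1) ^ m * (2 * m + 1) * e τ ^ triangular m) := by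
    rw [e_theta_term]; ring
  rw [h_prod, eta3, tsum_congr h_term, tsum_mul_left,
    (hasSum_int_neg_one_zpow_mul_pow_triangular hq).tsum_eq]
  linear_combination (-e (τ / 8) * (∏' n : ℕ, (1 - e τ ^ (n + 1))) ^ 3) * Complex.I_sq
end

section
/- Define η³(τ) := −i ∑_{m ∈ ℤ+1/2} m · e(m²τ/2 + m/2) for τ ∈ H. Then for every τ ∈ H, (−iτ)^{-3/2} · η³(−1/τ) = η³(τ), where (−iτ)^{-3/2} is taken with the principal branch of the power (note Re(−iτ) > 0 for τ ∈ H). -/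
open Complex MeasureTheory
open scoped Classical

/-!
Up to an exponential factor, `eta3 τ` is the derivative in `z` of the Jacobi theta function
`θ(z, τ)` at the half-period `(τ + 1) / 2`. The function `θ(·, τ)` vanishes there: it is even and
`1`-periodic, while `z ↦ z + τ` carries `-(τ + 1) / 2 + 1` to `(τ + 1) / 2` with multiplier `-1`.
In the functional equation of `∂θ/∂z` under `τ ↦ -1/τ` the term containing `θ` itself therefore
drops out, and the half-period is sent to the negative of the new half-period modulo `1`.
-/

section

open scoped Real

theorem jacobiTheta₂_add_one_div_two (τ : ℂ) : jacobiTheta₂ ((τ + 1) / 2) τ = 0 := by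
  have reflect : jacobiTheta₂ ((1 - τ) / 2) τ = jacobiTheta₂ ((τ + 1) / 2) τ := by
    rw [← jacobiTheta₂_neg_left, ← jacobiTheta₂_add_left]
    ring_nf
  have translate : jacobiTheta₂ ((τ + 1) / 2) τ = -jacobiTheta₂ ((1 - τ) / 2) τ := by
    have multiplier : cexp (-π * I * (τ + 2 * ((1 - τ) / 2))) = -1 := by
      rw [← Complex.exp_neg_pi_mul_I]
      ring_nf
    rw [← neg_one_mul, ← multiplier, ← jacobiTheta₂_add_left']
    ring_nf
  exact self_eq_neg.mp (reflect ▸ translate)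

theorem jacobiTheta₂'_add_one_div_two_functional_equation {τ : ℂ} (hτ : τ ≠ 0) :
    jacobiTheta₂' ((τ + 1) / 2) τ =
      -(1 / (-I * τ) ^ (1 / 2 : ℂ) * cexp (-π * I * ((τ + 1) / 2) ^ 2 / τ) / τ) *
        jacobiTheta₂' ((-1 / τ + 1) / 2) (-1 / τ) := by
  have half_period : (τ + 1) / 2 / τ = -((-1 / τ + 1) / 2) + 1 := by
    field_simp
    ring
  rw [jacobiTheta₂'_functional_equation, half_period, jacobiTheta₂_add_left,
    jacobiTheta₂_neg_left, jacobiTheta₂_add_one_div_two, jacobiTheta₂'_add_left,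
    jacobiTheta₂'_neg_left]
  ring

theorem hasSum_add_mul_jacobiTheta₂_term (a z : ℂ) {τ : ℂ} (hτ : 0 < τ.im) :
    HasSum (fun m : ℤ ↦ (m + a) * jacobiTheta₂_term m z τ)
      (jacobiTheta₂' z τ / (2 * π * I) + a * jacobiTheta₂ z τ) := by
  have term_eq (m : ℤ) : (m + a) * jacobiTheta₂_term m z τ =
      jacobiTheta₂'_term m z τ / (2 * π * I) + a * jacobiTheta₂_term m z τ := by
    rw [jacobiTheta₂'_term, mul_assoc, mul_div_cancel_left₀ _ Complex.two_pi_I_ne_zero, add_mul]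
  simp_rw [term_eq]
  exact ((hasSum_jacobiTheta₂'_term z hτ).div_const _).add
    ((hasSum_jacobiTheta₂_term z hτ).mul_left a)

theorem e_sq_add_eq_mul_jacobiTheta₂_term (a b τ : ℂ) (m : ℤ) :
    e ((m + a) ^ 2 / 2 * τ + (m + a) * b) =
      e (a ^ 2 / 2 * τ + a * b) * jacobiTheta₂_term m (a * τ + b) τ := by
  rw [e, e, jacobiTheta₂_term, ← Complex.exp_add]
  ring_nf

theorem eta3_eq_jacobiTheta₂' {τ : ℂ} (hτ : 0 < τ.im) :
    eta3 τ = -(e (τ / 8 + 1 / 4) / (2 * π)) * jacobiTheta₂' ((τ + 1) / 2) τ := by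
  have term_eq (m : ℤ) :
      ((m : ℂ) + 1 / 2) * e (((m : ℂ) + 1 / 2) ^ 2 / 2 * τ + ((m : ℂ) + 1 / 2) / 2) =
        e (τ / 8 + 1 / 4) * ((m + 1 / 2) * jacobiTheta₂_term m ((τ + 1) / 2) τ) := by
    have theta_term := e_sq_add_eq_mul_jacobiTheta₂_term (1 / 2) (1 / 2) τ m
    ring_nf at theta_term ⊢
    rw [theta_term]
    ring
  rw [eta3, tsum_congr term_eq, tsum_mul_left,
    (hasSum_add_mul_jacobiTheta₂_term _ _ hτ).tsum_eq, jacobiTheta₂_add_one_div_two]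
  field_simp
  ring

theorem e_mul_exp_neg_sq_div {τ : ℂ} (hτ : τ ≠ 0) :
    e (τ / 8 + 1 / 4) * cexp (-π * I * ((τ + 1) / 2) ^ 2 / τ) =
      -I * e (-1 / τ / 8 + 1 / 4) := by
  rw [← Complex.exp_neg_pi_div_two_mul_I, e, e, ← Complex.exp_add, ← Complex.exp_add]
  congr 1
  field_simp
  ring

theorem cpow_neg_three_div_two (z : ℂ) :
    z ^ (-3 / 2 : ℂ) = 1 / z ^ (1 / 2 : ℂ) * z⁻¹ := by
  rcases eq_or_ne z 0 with rfl | hz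
  · simp
  · rw [one_div (z ^ _), ← Complex.cpow_neg, ← Complex.cpow_neg_one, ← Complex.cpow_add _ _ hz]
    norm_num

end

/-- the weight 3/2 transformation `(-iτ)^{-3/2} η³(-1/τ) = η³(τ)`. -/
theorem eta3_inversion (τ : ℂ) (hτ : 0 < τ.im) :
    ((-Complex.I * τ) ^ ((-3/2 : ℂ))) * eta3 (-1/τ) = eta3 τ := by
  have τ_ne_zero : τ ≠ 0 := UpperHalfPlane.ne_zero ⟨τ, hτ⟩
  have inversion_im_pos : 0 < (-1 / τ).im := by
    simpa [neg_div, ← inv_neg] using UpperHalfPlane.im_inv_neg_coe_pos ⟨τ, hτ⟩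
  have inv_eq : (-I * τ)⁻¹ = I / τ := by
    rw [mul_inv, inv_neg, inv_I, neg_neg, div_eq_mul_inv]
  rw [eta3_eq_jacobiTheta₂' hτ, eta3_eq_jacobiTheta₂' inversion_im_pos,
    jacobiTheta₂'_add_one_div_two_functional_equation τ_ne_zero,
    cpow_neg_three_div_two, inv_eq]
  linear_combination (-(1 / (-I * τ) ^ (1 / 2 : ℂ)) / τ / (2 * Real.pi) *
    jacobiTheta₂' ((-1 / τ + 1) / 2) (-1 / τ)) * e_mul_exp_neg_sq_div τ_ne_zero
end
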